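/- arXiv:0710.0429 — 2 statements merged into one kernel-verified Lean document; each statement's English description precedes it below -/
import Mathlib

section
/- The quadruple (S(X,Ω), concatenation, {P_ω : ω ∈ Ω}, j_X) is the free Ω-operated semigroup on X. Precisely: for every semigroup H, every family of maps α_ω : H → H (ω ∈ Ω), and every map f : X → H, there exists a unique semigroup homomorphism (multiplication-preserving map) φ : S(X,Ω) → H such that φ(x) = f(x) for every x ∈ X and φ(P_ω(w)) = α_ω(φ(w)) for every w ∈ S(X,Ω) and every ω ∈ Ω. -/
/-- The left bracket letter `⌊_ω` as a one-letter word. -/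
def lbr {X Ω : Type*} (ω : Ω) : FreeMonoid (X ⊕ (Ω ⊕ Ω)) :=
  FreeMonoid.of (Sum.inr (Sum.inl ω))

/-- The right bracket letter `⌋_ω` as a one-letter word. -/
def rbr {X Ω : Type*} (ω : Ω) : FreeMonoid (X ⊕ (Ω ⊕ Ω)) :=
  FreeMonoid.of (Sum.inr (Sum.inr ω))

/-- The operator `P_ω` on the free monoid: `P_ω w = ⌊_ω w ⌋_ω`. -/
def Pop {X Ω : Type*} (ω : Ω) (w : FreeMonoid (X ⊕ (Ω ⊕ Ω))) : FreeMonoid (X ⊕ (Ω ⊕ Ω)) :=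
  lbr ω * w * rbr ω

/-- `S(X,Ω)`: the smallest subset of the free monoid on `X ⊔ {⌊_ω} ⊔ {⌋_ω}` containing all
one-letter words `x` (`x ∈ X`), closed under concatenation and all operators `P_ω`. -/
inductive IsSW (X Ω : Type*) : FreeMonoid (X ⊕ (Ω ⊕ Ω)) → Prop
  | letter (x : X) : IsSW X Ω (FreeMonoid.of (Sum.inl x))
  | mul {u v : FreeMonoid (X ⊕ (Ω ⊕ Ω))} : IsSW X Ω u → IsSW X Ω v → IsSW X Ω (u * v)
  | op (ω : Ω) {u : FreeMonoid (X ⊕ (Ω ⊕ Ω))} : IsSW X Ω u → IsSW X Ω (Pop ω u)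

/-- `S(X,Ω)` as a subsemigroup of the free monoid. -/
def SWsub (X Ω : Type*) : Subsemigroup (FreeMonoid (X ⊕ (Ω ⊕ Ω))) where
  carrier := {w | IsSW X Ω w}
  mul_mem' := fun h1 h2 => IsSW.mul h1 h2

/-- The operator `P_ω` restricted to `S(X,Ω)`. -/
def PopSub {X Ω : Type*} (ω : Ω) (w : SWsub X Ω) : SWsub X Ω :=
  ⟨Pop ω w.1, IsSW.op ω w.2⟩

/-- The natural map `j_X : X → S(X,Ω)` sending `x` to the one-letter word `x`. -/
def jSW {X Ω : Type*} (x : X) : SWsub X Ω :=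
  ⟨FreeMonoid.of (Sum.inl x), IsSW.letter x⟩

/-- One step of a stack machine evaluating a bracketed word. -/
noncomputable def swStep {X Ω H : Type*} [Semigroup H] (α : Ω → H → H) (f : X → H) :
    List (WithOne H) → X ⊕ (Ω ⊕ Ω) → List (WithOne H)
  | t :: s, Sum.inl x => (t * (f x : WithOne H)) :: s
  | s, Sum.inr (Sum.inl _) => 1 :: s
  | a :: b :: s, Sum.inr (Sum.inr ω) =>
      (b * WithOne.recOneCoe (motive := fun _ => WithOne H) 1
        (fun h => ((α ω h : H) : WithOne H)) a) :: s
  | s, _ => s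

/-- The stack machine reading the word `w` multiplies the top of the stack by `h`. -/
def SWEval {X Ω H : Type*} [Semigroup H] (α : Ω → H → H) (f : X → H)
    (w : FreeMonoid (X ⊕ (Ω ⊕ Ω))) (h : H) : Prop :=
  ∀ (t : WithOne H) (s : List (WithOne H)),
    (FreeMonoid.toList w).foldl (swStep α f) (t :: s) = (t * (h : WithOne H)) :: s

section
variable {X Ω H : Type*} [Semigroup H] {α : Ω → H → H} {f : X → H}

theorem SWEval.unique {w : FreeMonoid (X ⊕ (Ω ⊕ Ω))} {h k : H}
    (h1 : SWEval α f w h) (h2 : SWEval α f w k) : h = k := by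
  have e := (h1 1 []).symm.trans (h2 1 [])
  simpa using e

theorem SWEval.letter (x : X) : SWEval (Ω := Ω) α f (FreeMonoid.of (Sum.inl x)) (f x) := by
  intro t s
  simp [swStep]

theorem SWEval.mul {u v : FreeMonoid (X ⊕ (Ω ⊕ Ω))} {h k : H}
    (h1 : SWEval α f u h) (h2 : SWEval α f v k) : SWEval α f (u * v) (h * k) := by
  intro t s
  rw [FreeMonoid.toList_mul, List.foldl_append, h1, h2, WithOne.coe_mul, mul_assoc]

theorem SWEval.op (ω : Ω) {u : FreeMonoid (X ⊕ (Ω ⊕ Ω))} {h : H}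
    (h1 : SWEval α f u h) : SWEval α f (Pop ω u) (α ω h) := by
  intro t s
  have e : swStep α f (t :: s) (Sum.inr (Sum.inl ω)) = 1 :: t :: s := rfl
  simp only [Pop, lbr, rbr, FreeMonoid.toList_mul, List.foldl_append, FreeMonoid.toList_of,
    List.foldl_cons, List.foldl_nil, e]
  rw [h1, one_mul]
  rfl

theorem SWEval.exists {w : FreeMonoid (X ⊕ (Ω ⊕ Ω))} (hw : IsSW X Ω w) :
    ∃ h : H, SWEval α f w h := by
  induction hw with
  | letter x => exact ⟨_, SWEval.letter x⟩
  | mul _ _ ih1 ih2 =>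
    obtain ⟨a, ha⟩ := ih1
    obtain ⟨b, hb⟩ := ih2
    exact ⟨_, ha.mul hb⟩
  | op ω _ ih =>
    obtain ⟨a, ha⟩ := ih
    exact ⟨_, ha.op ω⟩

end

/-- `(S(X,Ω), concatenation, {P_ω}, j_X)` is the free `Ω`-operated semigroup on `X`:
for every semigroup `H`, family of maps `α_ω : H → H` and map `f : X → H`, there is a unique
semigroup homomorphism (multiplication-preserving map) `φ : S(X,Ω) → H` with `φ (j_X x) = f x`
for all `x ∈ X` and `φ (P_ω w) = α_ω (φ w)` for all `w ∈ S(X,Ω)`, `ω ∈ Ω`. -/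
theorem motzkinWords_free_operated_semigroup
    (X Ω : Type*) [Nonempty X] [Nonempty Ω]
    (H : Type*) [Semigroup H] (α : Ω → H → H) (f : X → H) :
    ∃! φ : SWsub X Ω →ₙ* H,
      (∀ x : X, φ (jSW x) = f x) ∧
      ∀ (ω : Ω) (w : SWsub X Ω), φ (PopSub ω w) = α ω (φ w) := by
  choose g hg using fun w : SWsub X Ω => SWEval.exists (α := α) (f := f) w.2
  refine ⟨⟨g, fun u v => (hg (u * v)).unique ((hg u).mul (hg v))⟩, ⟨?_, ?_⟩, ?_⟩
  · intro x
    exact (hg (jSW x)).unique (SWEval.letter x)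
  · intro ω w
    exact (hg (PopSub ω w)).unique ((hg w).op ω)
  · rintro ψ ⟨h1, h2⟩
    ext ⟨w, hw⟩
    refine SWEval.unique (α := α) (f := f) (w := w) ?_ (hg ⟨w, hw⟩)
    have key : ∀ w (hw : IsSW X Ω w), SWEval α f w (ψ ⟨w, hw⟩) := by
      intro w hw
      induction hw with
      | letter x =>
        have := h1 x
        rw [jSW] at this
        rw [this]
        exact SWEval.letter x
      | @mul u v hu hv ih1 ih2 =>
        have := map_mul ψ ⟨u, hu⟩ ⟨v, hv⟩
        have e : ψ ⟨u * v, IsSW.mul hu hv⟩ = ψ ⟨u, hu⟩ * ψ ⟨v, hv⟩ := this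
        rw [e]
        exact ih1.mul ih2
      | @op ω u hu ih =>
        have e : ψ ⟨Pop ω u, IsSW.op ω hu⟩ = α ω (ψ ⟨u, hu⟩) := h2 ω ⟨u, hu⟩
        rw [e]
        exact ih.op ω
    exact key w hw
end

section
/- The semigroup algebra k[S(X,Ω)] is the free Ω-operated nonunital k-algebra on X. Precisely: for every associative nonunital k-algebra A, every family of k-linear maps β_ω : A → A (ω ∈ Ω), and every map f : X → A, there exists a unique homomorphism of nonunital k-algebras φ : k[S(X,Ω)] → A such that φ(x) = f(x) for every x ∈ X and φ(P_ω(w)) = β_ω(φ(w)) for every w ∈ S(X,Ω) and every ω ∈ Ω (where elements of S(X,Ω) are viewed as basis elements of k[S(X,Ω)]). -/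
/-- `β` extended to `WithOne A`. -/
def betaOne {A Ω : Type*} (β : Ω → A → A) (ω : Ω) (c : WithOne A) : WithOne A :=
  WithOne.recOneCoe (motive := fun _ => WithOne A) 1 (fun a => ((β ω a : A) : WithOne A)) c

/-- One step of the stack machine evaluating bracketed words. -/
def stepSW {A X Ω : Type*} [Mul A] (β : Ω → A → A) (f : X → A) :
    List (WithOne A) → (X ⊕ (Ω ⊕ Ω)) → List (WithOne A)
  | c :: st, Sum.inl x => (c * (f x : A)) :: st
  | st, Sum.inr (Sum.inl _) => 1 :: st
  | c :: d :: st, Sum.inr (Sum.inr ω) => (d * betaOne β ω c) :: st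
  | st, _ => st

/-- The word `w` evaluates to `a`. -/
def EvalSW {A X Ω : Type*} [Semigroup A] (β : Ω → A → A) (f : X → A)
    (w : FreeMonoid (X ⊕ (Ω ⊕ Ω))) (a : A) : Prop :=
  ∀ (c : WithOne A) (st : List (WithOne A)),
    List.foldl (stepSW β f) (c :: st) (FreeMonoid.toList w) = (c * (a : WithOne A)) :: st

theorem EvalSW.unique {A X Ω : Type*} [Semigroup A] {β : Ω → A → A} {f : X → A}
    {w : FreeMonoid (X ⊕ (Ω ⊕ Ω))} {a b : A} (ha : EvalSW β f w a) (hb : EvalSW β f w b) :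
    a = b := by
  have h := (ha 1 []).symm.trans (hb 1 [])
  simpa using h

theorem EvalSW.letter {A X Ω : Type*} [Semigroup A] (β : Ω → A → A) (f : X → A) (x : X) :
    EvalSW β f (FreeMonoid.of (Sum.inl x)) (f x) := by
  intro c st
  simp [stepSW]

theorem EvalSW.mul {A X Ω : Type*} [Semigroup A] {β : Ω → A → A} {f : X → A}
    {u v : FreeMonoid (X ⊕ (Ω ⊕ Ω))} {a b : A} (ha : EvalSW β f u a) (hb : EvalSW β f v b) :
    EvalSW β f (u * v) (a * b) := by
  intro c st
  rw [FreeMonoid.toList_mul, List.foldl_append, ha, hb, WithOne.coe_mul, mul_assoc]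

theorem EvalSW.op {A X Ω : Type*} [Semigroup A] {β : Ω → A → A} {f : X → A} (ω : Ω)
    {u : FreeMonoid (X ⊕ (Ω ⊕ Ω))} {a : A} (ha : EvalSW β f u a) :
    EvalSW β f (Pop ω u) (β ω a) := by
  intro c st
  simp only [Pop, lbr, rbr, FreeMonoid.toList_mul, List.foldl_append, FreeMonoid.toList_of,
    List.foldl_cons, List.foldl_nil]
  have h1 : stepSW β f (c :: st) (Sum.inr (Sum.inl ω)) = 1 :: c :: st := rfl
  rw [h1, ha, one_mul]
  rfl

theorem EvalSW.exists {A X Ω : Type*} [Semigroup A] (β : Ω → A → A) (f : X → A)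
    {w : FreeMonoid (X ⊕ (Ω ⊕ Ω))} (hw : IsSW X Ω w) : ∃ a, EvalSW β f w a := by
  induction hw with
  | letter x => exact ⟨_, EvalSW.letter β f x⟩
  | mul _ _ h1 h2 =>
    obtain ⟨a, ha⟩ := h1
    obtain ⟨b, hb⟩ := h2
    exact ⟨_, ha.mul hb⟩
  | op ω _ h =>
    obtain ⟨a, ha⟩ := h
    exact ⟨_, ha.op ω⟩

/-- The semigroup algebra `k[S(X,Ω)]` is the free `Ω`-operated nonunital `k`-algebra on `X`:
for every associative nonunital `k`-algebra `A`, family of `k`-linear maps `β_ω : A → A` and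
map `f : X → A`, there is a unique homomorphism of nonunital `k`-algebras
`φ : k[S(X,Ω)] → A` with `φ x = f x` for all `x ∈ X` and `φ (P_ω w) = β_ω (φ w)` for all
`w ∈ S(X,Ω)`, `ω ∈ Ω` (elements of `S(X,Ω)` being viewed as basis elements of `k[S(X,Ω)]`). -/
theorem semigroupAlgebra_free_operated_nonunital_algebra
    (k : Type*) [CommRing k] (X Ω : Type*) [Nonempty X] [Nonempty Ω]
    (A : Type*) [NonUnitalSemiring A] [Module k A] [SMulCommClass k A A] [IsScalarTower k A A]
    (β : Ω → A →ₗ[k] A) (f : X → A) :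
    ∃! φ : MonoidAlgebra k ↥(SWsub X Ω) →ₙₐ[k] A,
      (∀ x : X, φ (MonoidAlgebra.single (jSW x) (1 : k)) = f x) ∧
      ∀ (ω : Ω) (w : SWsub X Ω),
        φ (MonoidAlgebra.single (PopSub ω w) (1 : k)) =
          β ω (φ (MonoidAlgebra.single w (1 : k))) := by
  classical
  choose val hval using fun w : SWsub X Ω => EvalSW.exists (fun ω a => β ω a) f w.2
  let g : SWsub X Ω →ₙ* A :=
    { toFun := val
      map_mul' := fun u v => (hval (u * v)).unique ((hval u).mul (hval v)) }
  have hg : ∀ w, MonoidAlgebra.liftMagma k g (MonoidAlgebra.single w (1 : k)) = val w := by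
    intro w
    simp [MonoidAlgebra.liftMagma, g]
  refine ⟨MonoidAlgebra.liftMagma k g, ⟨fun x => ?_, fun ω w => ?_⟩, ?_⟩
  · rw [hg]
    exact (hval (jSW x)).unique (EvalSW.letter _ f x)
  · rw [hg, hg]
    exact (hval (PopSub ω w)).unique ((hval w).op ω)
  · rintro ψ ⟨h1, h2⟩
    apply MonoidAlgebra.nonUnitalAlgHom_ext k
    intro w
    rw [hg]
    obtain ⟨w, hw⟩ := w
    refine EvalSW.unique (β := fun ω a => β ω a) (f := f) (w := w) ?_ (hval ⟨w, hw⟩)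
    induction hw with
    | letter x =>
      have := h1 x
      rw [jSW] at this
      rw [this]
      exact EvalSW.letter _ f x
    | @mul u v hu hv i1 i2 =>
      have h : (MonoidAlgebra.single (⟨u * v, IsSW.mul hu hv⟩ : SWsub X Ω) (1 : k)) =
          MonoidAlgebra.single (⟨u, hu⟩ : SWsub X Ω) (1 : k) *
            MonoidAlgebra.single (⟨v, hv⟩ : SWsub X Ω) (1 : k) := by
        rw [MonoidAlgebra.single_mul_single, one_mul]
        rfl
      rw [h, map_mul]
      exact i1.mul i2
    | @op ω u hu i =>
      have := h2 ω ⟨u, hu⟩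
      rw [PopSub] at this
      rw [this]
      exact i.op ω
end
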